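/- Let G^i be a spray with coefficients N^i_j, let F be a Finsler structure on U with metric tensor g_{ij} and inverse metric g^{ij}, and let F̃ be a Finsler structure on U. Assume: (1) ∇g_{ij} = S(g_{ij}) − Σ_k (N^k_i g_{kj} + N^k_j g_{ik}) = 0 on Ω for all i, j (S is the geodesic spray of F); and (2) ∇(∂²F̃/∂y^i∂y^j) = S(∂²F̃/∂y^i∂y^j) − Σ_k (N^k_i ∂²F̃/∂y^k∂y^j + N^k_j ∂²F̃/∂y^i∂y^k) = 0 on Ω for all i, j. Define the (1,1)-tensor H^i_j = F Σ_k g^{ik} ∂²F̃/∂y^k∂y^j on Ω. Then H is geodesically invariant: ∇H^i_j = S(H^i_j) + Σ_k N^i_k H^k_j − Σ_k N^k_j H^i_k = 0 on Ω for all i, j; and consequently, for every positive integer m, the scalar function tr(H^m) (the trace of the m-th matrix power of (H^i_j)) is a first integral of the spray: S(tr(H^m)) = 0 on Ω. -/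

import Mathlib

noncomputable section

/-- A point `(x, y)` of the tangent space coordinates over `ℝⁿ`. -/
abbrev Pt (n : ℕ) : Type := (Fin n → ℝ) × (Fin n → ℝ)

/-- `Ω = U × (ℝⁿ \ {0})`. -/
def OmegaSet {n : ℕ} (U : Set (Fin n → ℝ)) : Set (Pt n) :=
  {p : Pt n | p.1 ∈ U ∧ p.2 ≠ 0}

/-- Partial derivative `∂f/∂x^i`. -/
def pdx {n : ℕ} (f : Pt n → ℝ) (i : Fin n) (p : Pt n) : ℝ :=
  fderiv ℝ f p (Pi.single i 1, 0)

/-- Partial derivative `∂f/∂y^i`. -/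
def pdy {n : ℕ} (f : Pt n → ℝ) (i : Fin n) (p : Pt n) : ℝ :=
  fderiv ℝ f p (0, Pi.single i 1)

/-- Second fibre derivative `∂²f/∂y^i∂y^j`. -/
def pdyy {n : ℕ} (f : Pt n → ℝ) (i j : Fin n) : Pt n → ℝ :=
  pdy (pdy f j) i

/-- The spray vector field applied to a function:
`S(f) = Σ_k (y^k ∂f/∂x^k − 2 G^k ∂f/∂y^k)`. -/
def Sop {n : ℕ} (G : Fin n → Pt n → ℝ) (f : Pt n → ℝ) (p : Pt n) : ℝ :=
  ∑ k, (p.2 k * pdx f k p - 2 * G k p * pdy f k p)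

/-- Connection coefficients `N^i_j = ∂G^i/∂y^j`. -/
def Ncoef {n : ℕ} (G : Fin n → Pt n → ℝ) (i j : Fin n) : Pt n → ℝ :=
  pdy (G i) j

/-- Horizontal derivative `δf/δx^i = ∂f/∂x^i − Σ_j N^j_i ∂f/∂y^j`. -/
def deltax {n : ℕ} (G : Fin n → Pt n → ℝ) (f : Pt n → ℝ) (i : Fin n) (p : Pt n) : ℝ :=
  pdx f i p - ∑ j, Ncoef G j i p * pdy f j p

/-- Dynamical covariant derivative of a `(0,2)` family:
`∇T_{ij} = S(T_{ij}) − Σ_k (N^k_i T_{kj} + N^k_j T_{ik})`. -/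
def nablaT {n : ℕ} (G : Fin n → Pt n → ℝ) (T : Fin n → Fin n → Pt n → ℝ)
    (i j : Fin n) (p : Pt n) : ℝ :=
  Sop G (T i j) p - ∑ k, (Ncoef G k i p * T k j p + Ncoef G k j p * T i k p)

/-- `f` is positively `k`-homogeneous in the fibre variable `y`, on `Ω`. -/
def PosHomog {n : ℕ} (U : Set (Fin n → ℝ)) (k : ℤ) (f : Pt n → ℝ) : Prop :=
  ∀ L : ℝ, 0 < L → ∀ p ∈ OmegaSet U, f (p.1, L • p.2) = L ^ k * f p

/-- A spray: smooth, positively 2-homogeneous coefficients `G^i`. -/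
def IsSpray {n : ℕ} (U : Set (Fin n → ℝ)) (G : Fin n → Pt n → ℝ) : Prop :=
  ∀ i, ContDiffOn ℝ (⊤ : ℕ∞) (G i) (OmegaSet U) ∧ PosHomog U 2 (G i)

/-- Components of the Euler-Lagrange 1-form: `(δ_S f)_i = S(∂f/∂y^i) − ∂f/∂x^i`. -/
def EL {n : ℕ} (G : Fin n → Pt n → ℝ) (f : Pt n → ℝ) (i : Fin n) (p : Pt n) : ℝ :=
  Sop G (pdy f i) p - pdx f i p

/-- The metric tensor `g_{ij} = ½ ∂²(F²)/∂y^i∂y^j` of a Finsler function. -/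
def metricTensor {n : ℕ} (F : Pt n → ℝ) (i j : Fin n) (p : Pt n) : ℝ :=
  (1 / 2) * pdyy (fun q => F q ^ 2) i j p

/-- A Finsler structure on `U`: smooth, positive, positively 1-homogeneous,
with invertible metric tensor at every point of `Ω`. -/
def IsFinsler {n : ℕ} (U : Set (Fin n → ℝ)) (F : Pt n → ℝ) : Prop :=
  ContDiffOn ℝ (⊤ : ℕ∞) F (OmegaSet U) ∧ (∀ p ∈ OmegaSet U, 0 < F p) ∧ PosHomog U 1 F ∧
    ∀ p ∈ OmegaSet U, IsUnit (Matrix.of (fun i j => metricTensor F i j p))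

/-- The `(1,1)`-tensor `H^i_j = F Σ_k g^{ik} ∂²F̃/∂y^k∂y^j`. -/
def Hten {n : ℕ} (F Ft : Pt n → ℝ) (ginv : Fin n → Fin n → Pt n → ℝ)
    (i j : Fin n) (q : Pt n) : ℝ :=
  F q * ∑ k, ginv i k q * pdyy Ft k j q


theorem omega_isOpen {n : ℕ} {U : Set (Fin n → ℝ)} (hU : IsOpen U) : IsOpen (OmegaSet U) := by
  have : OmegaSet U = (Prod.fst ⁻¹' U) ∩ (Prod.snd ⁻¹' ({0}ᶜ : Set (Fin n → ℝ))) := by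
    ext p; simp [OmegaSet]
  rw [this]
  exact (hU.preimage continuous_fst).inter (isOpen_compl_singleton.preimage continuous_snd)

theorem sum_pdy {n : ℕ} (f : Pt n → ℝ) (p : Pt n) (w : Fin n → ℝ) :
    ∑ i, w i * pdy f i p = fderiv ℝ f p (0, w) := by
  have : ((0, w) : Pt n) = ∑ i, w i • ((0, Pi.single i 1) : Pt n) := by
    refine Prod.ext ?_ ?_
    · simp [Prod.fst_sum]
    · ext j
      simp [Prod.snd_sum, Finset.sum_apply, Pi.single_apply]
  rw [this, map_sum]
  refine Finset.sum_congr rfl fun i _ => ?_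
  rw [map_smul, smul_eq_mul, pdy]

theorem sum_pdx {n : ℕ} (f : Pt n → ℝ) (p : Pt n) (w : Fin n → ℝ) :
    ∑ i, w i * pdx f i p = fderiv ℝ f p (w, 0) := by
  have : ((w, 0) : Pt n) = ∑ i, w i • ((Pi.single i 1, 0) : Pt n) := by
    refine Prod.ext ?_ ?_
    · ext j
      simp [Prod.fst_sum, Finset.sum_apply, Pi.single_apply]
    · simp [Prod.snd_sum]
  rw [this, map_sum]
  refine Finset.sum_congr rfl fun i _ => ?_
  rw [map_smul, smul_eq_mul, pdx]

def Vs {n : ℕ} (G : Fin n → Pt n → ℝ) (p : Pt n) : Pt n := (p.2, fun k => -(2 * G k p))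

theorem Sop_eq {n : ℕ} (G : Fin n → Pt n → ℝ) (f : Pt n → ℝ) (p : Pt n) :
    Sop G f p = fderiv ℝ f p (Vs G p) := by
  have : Vs G p = (p.2, 0) + (0, fun k => -(2 * G k p)) := by simp [Vs]
  rw [this, map_add, ← sum_pdx, ← sum_pdy, ← Finset.sum_add_distrib]
  unfold Sop
  refine Finset.sum_congr rfl fun k _ => ?_
  ring

theorem euler {n : ℕ} {U : Set (Fin n → ℝ)} {f : Pt n → ℝ}
    (hh : PosHomog U 2 f) {p : Pt n} (hp : p ∈ OmegaSet U) (hd : DifferentiableAt ℝ f p) :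
    fderiv ℝ f p (0, p.2) = 2 * f p := by
  have hc : HasDerivAt (fun t : ℝ => ((p.1, t • p.2) : Pt n)) (0, p.2) 1 := by
    have h := (hasDerivAt_id (1 : ℝ)).smul_const p.2
    simp only [id, one_smul] at h
    exact (hasDerivAt_const (1 : ℝ) p.1).prodMk h
  have hd' : HasFDerivAt f (fderiv ℝ f p) ((fun t : ℝ => ((p.1, t • p.2) : Pt n)) 1) := by
    simpa using hd.hasFDerivAt
  have h1 := hd'.comp_hasDerivAt (1 : ℝ) hc
  have h2 : HasDerivAt (fun t : ℝ => t ^ 2 * f p) (2 * f p) 1 := by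
    have := (hasDerivAt_pow 2 (1 : ℝ)).mul_const (f p)
    simpa using this
  refine h1.unique (h2.congr_of_eventuallyEq ?_)
  filter_upwards [lt_mem_nhds (zero_lt_one : (0 : ℝ) < 1)] with t ht
  have := hh t ht p hp
  simpa using this

theorem pdy_smooth {n : ℕ} {U : Set (Fin n → ℝ)} (hU : IsOpen U) {f : Pt n → ℝ}
    (hf : ContDiffOn ℝ (⊤ : ℕ∞) f (OmegaSet U)) (i : Fin n) :
    ContDiffOn ℝ (⊤ : ℕ∞) (pdy f i) (OmegaSet U) := by
  have h := hf.fderiv_of_isOpen (m := (⊤ : ℕ∞)) (omega_isOpen hU) (by simp)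
  exact h.clm_apply contDiffOn_const

theorem diffAt {n : ℕ} {U : Set (Fin n → ℝ)} (hU : IsOpen U) {f : Pt n → ℝ}
    (hf : ContDiffOn ℝ (⊤ : ℕ∞) f (OmegaSet U)) {p : Pt n} (hp : p ∈ OmegaSet U) :
    DifferentiableAt ℝ f p :=
  (hf.contDiffAt ((omega_isOpen hU).mem_nhds hp)).differentiableAt (by simp)

/-- Entrywise directional derivative of a matrix valued function. -/
def HasD {n : ℕ} (A : Pt n → Matrix (Fin n) (Fin n) ℝ) (A' : Matrix (Fin n) (Fin n) ℝ)
    (p v : Pt n) : Prop :=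
  ∀ i j, DifferentiableAt ℝ (fun q => A q i j) p ∧ fderiv ℝ (fun q => A q i j) p v = A' i j

theorem HasD.mul {n : ℕ} {A B : Pt n → Matrix (Fin n) (Fin n) ℝ}
    {A' B' : Matrix (Fin n) (Fin n) ℝ} {p v : Pt n} (hA : HasD A A' p v) (hB : HasD B B' p v) :
    HasD (fun q => A q * B q) (A' * B p + A p * B') p v := by
  intro i j
  have h : HasFDerivAt (fun q => (A q * B q) i j)
      (∑ k, (A p i k • fderiv ℝ (fun q => B q k j) p + B p k j • fderiv ℝ (fun q => A q i k) p)) p := by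
    simp only [Matrix.mul_apply]
    exact HasFDerivAt.fun_sum fun k _ => (hA i k).1.hasFDerivAt.mul (hB k j).1.hasFDerivAt
  refine ⟨h.differentiableAt, ?_⟩
  rw [h.fderiv]
  simp only [_root_.sum_apply, add_apply, smul_apply, 
    (hA _ _).2, (hB _ _).2, Matrix.add_apply, Matrix.mul_apply,
    smul_eq_mul, ← Finset.sum_add_distrib]
  refine Finset.sum_congr rfl fun k _ => ?_
  ring

theorem HasD.unique {n : ℕ} {A : Pt n → Matrix (Fin n) (Fin n) ℝ}
    {A' B' : Matrix (Fin n) (Fin n) ℝ} {p v : Pt n} (hA : HasD A A' p v) (hB : HasD A B' p v) :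
    A' = B' := by
  ext i j
  rw [← (hA i j).2, (hB i j).2]

theorem HasD.congr {n : ℕ} {A B : Pt n → Matrix (Fin n) (Fin n) ℝ}
    {A' : Matrix (Fin n) (Fin n) ℝ} {p v : Pt n} (hA : HasD A A' p v)
    (h : A =ᶠ[nhds p] B) : HasD B A' p v := by
  intro i j
  have h' : (fun q => A q i j) =ᶠ[nhds p] (fun q => B q i j) := by
    filter_upwards [h] with q hq
    rw [hq]
  exact ⟨h'.differentiableAt_iff.1 (hA i j).1, by rw [← h'.fderiv_eq]; exact (hA i j).2⟩

theorem HasD.const {n : ℕ} (C : Matrix (Fin n) (Fin n) ℝ) (p v : Pt n) :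
    HasD (fun _ => C) 0 p v := by
  intro i j
  simp

theorem det_diff {n : ℕ} {A : Pt n → Matrix (Fin n) (Fin n) ℝ} {p : Pt n}
    (hA : ∀ i j, DifferentiableAt ℝ (fun q => A q i j) p) :
    DifferentiableAt ℝ (fun q => (A q).det) p := by
  simp only [Matrix.det_apply']
  refine DifferentiableAt.fun_sum fun σ _ => ?_
  refine DifferentiableAt.const_mul ?_ _
  classical
  exact (HasFDerivAt.finsetProd (u := Finset.univ) (g := fun i q => A q (σ i) i)
    fun i _ => (hA _ _).hasFDerivAt).differentiableAt

theorem inv_diff {n : ℕ} {A : Pt n → Matrix (Fin n) (Fin n) ℝ} {p : Pt n}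
    (hA : ∀ i j, DifferentiableAt ℝ (fun q => A q i j) p) (hu : IsUnit (A p)) (i j : Fin n) :
    DifferentiableAt ℝ (fun q => (A q)⁻¹ i j) p := by
  have h0 : (A p).det ≠ 0 := ((Matrix.isUnit_iff_isUnit_det _).1 hu).ne_zero
  simp only [Matrix.inv_def, Matrix.smul_apply, Ring.inverse_eq_inv', smul_eq_mul,
    Matrix.adjugate_apply]
  refine ((det_diff hA).inv h0).mul (det_diff fun a b => ?_)
  by_cases h : a = j
  · subst h; simp
  · simpa [Matrix.updateRow_apply, h] using hA a b

theorem energy_eq {n : ℕ} {U : Set (Fin n → ℝ)} (hU : IsOpen U) {F : Pt n → ℝ}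
    (hF : IsFinsler U F) {p : Pt n} (hp : p ∈ OmegaSet U) :
    F p ^ 2 = ∑ i, ∑ j, p.2 i * (metricTensor F i j p * p.2 j) := by
  set E : Pt n → ℝ := fun q => F q ^ 2 with hE
  have hs : ContDiffOn ℝ (⊤ : ℕ∞) E (OmegaSet U) := hF.1.pow 2
  have hh : PosHomog U 2 E := by
    intro L hL q hq
    have := hF.2.2.1 L hL q hq
    simp only [hE, this]
    norm_cast
    ring
  have e1 : (fun q : Pt n => ∑ j, q.2 j * pdy E j q) =ᶠ[nhds p] fun q => 2 * E q := by
    filter_upwards [(omega_isOpen hU).mem_nhds hp] with q hq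
    rw [sum_pdy, euler hh hq (diffAt hU hs hq)]
  have hy : ∀ j, HasFDerivAt (fun q : Pt n => q.2 j)
      ((ContinuousLinearMap.proj j).comp (ContinuousLinearMap.snd ℝ (Fin n → ℝ) (Fin n → ℝ))) p :=
    fun j => ContinuousLinearMap.hasFDerivAt
      ((ContinuousLinearMap.proj j).comp (ContinuousLinearMap.snd ℝ (Fin n → ℝ) (Fin n → ℝ)))
  have e2 := HasFDerivAt.fun_sum (u := Finset.univ) fun j _ =>
    (hy j).mul (diffAt hU (pdy_smooth hU hs j) hp).hasFDerivAt
  have e3 := ((diffAt hU hs hp).hasFDerivAt.const_mul 2).congr_of_eventuallyEq e1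
  have e4 := congrArg (fun L => L ((0, p.2) : Pt n)) (e2.unique e3)
  have e5 := euler hh hp (diffAt hU hs hp)
  simp only [_root_.sum_apply, add_apply, smul_apply,
    smul_eq_mul, e5,
    ContinuousLinearMap.comp_apply, ContinuousLinearMap.proj_apply,
    ContinuousLinearMap.coe_snd', Finset.sum_add_distrib] at e4
  have e6 : ∑ j, pdy E j p * p.2 j = 2 * E p := by
    rw [← e5, ← sum_pdy]
    exact Finset.sum_congr rfl fun j _ => mul_comm _ _
  rw [e6] at e4
  have e7 : ∑ i, ∑ j, p.2 i * (metricTensor F i j p * p.2 j)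
      = (1 / 2) * ∑ j, p.2 j * fderiv ℝ (pdy E j) p (0, p.2) := by
    rw [Finset.sum_comm, Finset.mul_sum]
    refine Finset.sum_congr rfl fun j _ => ?_
    rw [← sum_pdy, Finset.mul_sum, Finset.mul_sum]
    refine Finset.sum_congr rfl fun i _ => ?_
    simp only [metricTensor, pdyy, hE]
    ring
  rw [e7]
  change E p = _
  linarith

theorem SF_zero {n : ℕ} {U : Set (Fin n → ℝ)} (hU : IsOpen U)
    {G : Fin n → Pt n → ℝ} (hG : IsSpray U G) {F : Pt n → ℝ}
    (hF : IsFinsler U F) 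
    (h1 : ∀ i j, ∀ p ∈ OmegaSet U, nablaT G (metricTensor F) i j p = 0)
    {p : Pt n} (hp : p ∈ OmegaSet U) : fderiv ℝ F p (Vs G p) = 0 := by
  have hg : ∀ i j, DifferentiableAt ℝ (metricTensor F i j) p := fun i j =>
    (diffAt hU (pdy_smooth hU (pdy_smooth hU (hF.1.pow 2) j) i) hp).const_mul _
  have hy : ∀ j, HasFDerivAt (fun q : Pt n => q.2 j)
      ((ContinuousLinearMap.proj j).comp (ContinuousLinearMap.snd ℝ (Fin n → ℝ) (Fin n → ℝ))) p :=
    fun j => ContinuousLinearMap.hasFDerivAt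
      ((ContinuousLinearMap.proj j).comp (ContinuousLinearMap.snd ℝ (Fin n → ℝ) (Fin n → ℝ)))
  have e1 : (fun q => F q ^ 2) =ᶠ[nhds p]
      fun q => ∑ i, ∑ j, q.2 i * (metricTensor F i j q * q.2 j) := by
    filter_upwards [(omega_isOpen hU).mem_nhds hp] with q hq
    exact energy_eq hU hF hq
  have e2 := HasFDerivAt.fun_sum (u := Finset.univ) fun i _ =>
    HasFDerivAt.fun_sum (u := Finset.univ) fun j _ =>
      (hy i).mul ((hg i j).hasFDerivAt.mul (hy j))
  have e3 := ((diffAt hU hF.1 hp).hasFDerivAt.pow 2)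
  have e4 := congrArg (fun L => L (Vs G p)) (e3.unique (e2.congr_of_eventuallyEq e1))
  have hS : ∀ i j, fderiv ℝ (metricTensor F i j) p (Vs G p) =
      ∑ k, (Ncoef G k i p * metricTensor F k j p + Ncoef G k j p * metricTensor F i k p) := by
    intro i j
    rw [← Sop_eq]
    exact sub_eq_zero.1 (h1 i j p hp)
  have hN : ∀ k, ∑ i, p.2 i * Ncoef G k i p = 2 * G k p := by
    intro k
    simp only [Ncoef]
    rw [sum_pdy, euler (hG k).2 hp (diffAt hU (hG k).1 hp)]
  have hA : ∑ i, ∑ j, p.2 i * ((∑ k, Ncoef G k i p * metricTensor F k j p) * p.2 j)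
      = ∑ k, ∑ j, (2 * G k p) * (metricTensor F k j p * p.2 j) := by
    simp only [← hN, Finset.sum_mul, Finset.mul_sum]
    rw [Finset.sum_comm]
    conv_rhs => rw [Finset.sum_comm]
    refine Finset.sum_congr rfl fun j _ => ?_
    rw [Finset.sum_comm]
    exact Finset.sum_congr rfl fun _ _ => Finset.sum_congr rfl fun _ _ => by ring
  have hB : ∑ i, ∑ j, p.2 i * ((∑ k, Ncoef G k j p * metricTensor F i k p) * p.2 j)
      = ∑ i, ∑ k, p.2 i * (metricTensor F i k p * (2 * G k p)) := by
    simp only [← hN, Finset.sum_mul, Finset.mul_sum]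
    refine Finset.sum_congr rfl fun i _ => ?_
    rw [Finset.sum_comm]
    exact Finset.sum_congr rfl fun _ _ => Finset.sum_congr rfl fun _ _ => by ring
  have hV : ∀ i, (Vs G p).2 i = -(2 * G i p) := fun i => rfl
  have e5 : 2 * F p * fderiv ℝ F p (Vs G p) = 0 := by
    simp only [_root_.sum_apply, add_apply, smul_apply,
      smul_eq_mul, hS,
      ContinuousLinearMap.comp_apply, ContinuousLinearMap.proj_apply,
      ContinuousLinearMap.coe_snd', hV, Pi.mul_apply] at e4
    have e6 : ∑ i, ∑ j, (p.2 i * (metricTensor F i j p * -(2 * G j p) +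
        p.2 j * ∑ k, (Ncoef G k i p * metricTensor F k j p + Ncoef G k j p * metricTensor F i k p))
        + metricTensor F i j p * p.2 j * -(2 * G i p)) =
        (∑ i, ∑ j, p.2 i * ((∑ k, Ncoef G k i p * metricTensor F k j p) * p.2 j)
        - ∑ k, ∑ j, (2 * G k p) * (metricTensor F k j p * p.2 j)) +
        (∑ i, ∑ j, p.2 i * ((∑ k, Ncoef G k j p * metricTensor F i k p) * p.2 j)
        - ∑ i, ∑ k, p.2 i * (metricTensor F i k p * (2 * G k p))) := by
      simp only [← Finset.sum_sub_distrib, ← Finset.sum_add_distrib]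
      refine Finset.sum_congr rfl fun i _ => Finset.sum_congr rfl fun j _ => ?_
      rw [Finset.sum_add_distrib]
      ring
    rw [e6, hA, hB] at e4
    simpa using e4
  have hpos := hF.2.1 p hp
  rcases mul_eq_zero.1 e5 with h | h
  · linarith
  · exact h

theorem H_hasD {n : ℕ} (U : Set (Fin n → ℝ)) (hU : IsOpen U)
    (G : Fin n → Pt n → ℝ) (hG : IsSpray U G)
    (F : Pt n → ℝ) (hF : IsFinsler U F)
    (Ft : Pt n → ℝ) (hFt : IsFinsler U Ft)
    (ginv : Fin n → Fin n → Pt n → ℝ)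
    (hinv : ∀ p ∈ OmegaSet U,
        Matrix.of (fun i j => metricTensor F i j p) * Matrix.of (fun i j => ginv i j p) = 1 ∧
        Matrix.of (fun i j => ginv i j p) * Matrix.of (fun i j => metricTensor F i j p) = 1)
    (h1 : ∀ i j, ∀ p ∈ OmegaSet U, nablaT G (metricTensor F) i j p = 0)
    (h2 : ∀ i j, ∀ p ∈ OmegaSet U, nablaT G (pdyy Ft) i j p = 0)
    {p : Pt n} (hp : p ∈ OmegaSet U) :
    HasD (fun q => Matrix.of (fun i j => Hten F Ft ginv i j q))
      (Matrix.of (fun i j => Hten F Ft ginv i j p) * Matrix.of (fun i j => Ncoef G i j p)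
       - Matrix.of (fun i j => Ncoef G i j p) * Matrix.of (fun i j => Hten F Ft ginv i j p))
      p (Vs G p) := by
  have hg : ∀ i j, DifferentiableAt ℝ (metricTensor F i j) p := fun i j =>
    (diffAt hU (pdy_smooth hU (pdy_smooth hU (hF.1.pow 2) j) i) hp).const_mul _
  set N : Matrix (Fin n) (Fin n) ℝ := Matrix.of (fun i j => Ncoef G i j p) with hN
  set g : Pt n → Matrix (Fin n) (Fin n) ℝ :=
    fun q => Matrix.of (fun i j => metricTensor F i j q) with hgdef
  set gi : Pt n → Matrix (Fin n) (Fin n) ℝ :=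
    fun q => Matrix.of (fun i j => ginv i j q) with hgi
  set T : Pt n → Matrix (Fin n) (Fin n) ℝ :=
    fun q => Matrix.of (fun i j => pdyy Ft i j q) with hT
  have key : ∀ (t : Fin n → Fin n → Pt n → ℝ), (∀ i j, DifferentiableAt ℝ (t i j) p) →
      (∀ i j, nablaT G t i j p = 0) →
      HasD (fun q => Matrix.of (fun i j => t i j q))
        (N.transpose * Matrix.of (fun i j => t i j p) + Matrix.of (fun i j => t i j p) * N)
        p (Vs G p) := by
    intro t ht hn i j
    refine ⟨ht i j, ?_⟩
    have h3 := sub_eq_zero.1 (hn i j)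
    rw [Sop_eq] at h3
    simp only [Matrix.of_apply, Matrix.add_apply, Matrix.mul_apply, Matrix.transpose_apply, hN,
      ← Finset.sum_add_distrib]
    refine h3.trans (Finset.sum_congr rfl fun k _ => by ring)
  have dg : HasD g (N.transpose * g p + g p * N) p (Vs G p) := key _ hg fun i j => h1 i j p hp
  have dT : HasD T (N.transpose * T p + T p * N) p (Vs G p) :=
    key _ (fun i j => diffAt hU (pdy_smooth hU (pdy_smooth hU hFt.1 j) i) hp)
      fun i j => h2 i j p hp
  have ev := (omega_isOpen hU).mem_nhds hp
  have dgi0 : HasD gi (Matrix.of fun i j => fderiv ℝ (fun q => gi q i j) p (Vs G p)) p (Vs G p) := by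
    intro i j
    refine ⟨?_, rfl⟩
    have := inv_diff (A := g) (p := p) hg (hF.2.2.2 p hp) i j
    refine this.congr_of_eventuallyEq ?_
    filter_upwards [ev] with q hq
    rw [Matrix.inv_eq_right_inv (hinv q hq).1]
  set X := (Matrix.of fun i j => fderiv ℝ (fun q => gi q i j) p (Vs G p))
  have i1 : g p * gi p = 1 := (hinv p hp).1
  have i2 : gi p * g p = 1 := (hinv p hp).2
  have hX : X = -(gi p * N.transpose) - N * gi p := by
    have h3 : HasD (fun q => g q * gi q) 0 p (Vs G p) := by
      refine (HasD.const 1 p (Vs G p)).congr ?_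
      filter_upwards [ev] with q hq
      exact (hinv q hq).1.symm
    have h4 := (dg.mul dgi0).unique h3
    have h5 : gi p * ((N.transpose * g p + g p * N) * gi p + g p * X) =
        gi p * N.transpose * (g p * gi p) + (gi p * g p) * N * gi p + (gi p * g p) * X := by
      noncomm_ring
    rw [h4, i1, i2] at h5
    simp only [mul_zero, mul_one, one_mul] at h5
    rw [eq_sub_iff_add_eq, eq_neg_iff_add_eq_zero, h5]
    abel
  rw [hX] at dgi0
  have dP := dgi0.mul dT
  have hP : (-(gi p * N.transpose) - N * gi p) * T p + gi p * (N.transpose * T p + T p * N)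
      = gi p * T p * N - N * (gi p * T p) := by noncomm_ring
  rw [hP] at dP
  have hF0 := SF_zero hU hG hF h1 hp
  have hH : ∀ q, Matrix.of (fun i j => Hten F Ft ginv i j q) = F q • (gi q * T q) := by
    intro q
    ext i j
    simp [Hten, hgi, hT, Matrix.mul_apply]
  simp only [hH]
  intro i j
  have hd := (diffAt hU hF.1 hp).hasFDerivAt.mul (dP i j).1.hasFDerivAt
  refine ⟨hd.differentiableAt, ?_⟩
  refine (congrArg (fun L => L (Vs G p)) hd.fderiv).trans ?_
  simp only [add_apply, smul_apply,
      smul_eq_mul, hF0, (dP i j).2,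
      mul_zero, add_zero, Matrix.smul_mul, Matrix.mul_smul, ← smul_sub, Matrix.smul_apply]

theorem HasD.pow {n : ℕ} {A : Pt n → Matrix (Fin n) (Fin n) ℝ}
    {N : Matrix (Fin n) (Fin n) ℝ} {p v : Pt n} (hA : HasD A (A p * N - N * A p) p v) (m : ℕ) :
    HasD (fun q => A q ^ m) (A p ^ m * N - N * A p ^ m) p v := by
  induction m with
  | zero => simpa using HasD.const 1 p v
  | succ m ih =>
    have h := ih.mul hA
    simp only [pow_succ]
    convert h using 1
    noncomm_ring

/-- if `S` is the geodesic spray of `F` (`∇g_{ij} = 0`) and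
`∇(∂²F̃/∂y^i∂y^j) = 0`, then the tensor `H^i_j = F Σ_k g^{ik} ∂²F̃/∂y^k∂y^j` is geodesically
invariant, `∇H^i_j = 0`, and for every `m ≥ 1` the trace of `H^m` is a first integral:
`S(tr(H^m)) = 0`. -/
theorem statement12 {n : ℕ} (hn : 1 ≤ n) (U : Set (Fin n → ℝ)) (hU : IsOpen U)
    (G : Fin n → Pt n → ℝ) (hG : IsSpray U G)
    (F : Pt n → ℝ) (hF : IsFinsler U F)
    (Ft : Pt n → ℝ) (hFt : IsFinsler U Ft)
    (ginv : Fin n → Fin n → Pt n → ℝ)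
    (hinv : ∀ p ∈ OmegaSet U,
        Matrix.of (fun i j => metricTensor F i j p) * Matrix.of (fun i j => ginv i j p) = 1 ∧
        Matrix.of (fun i j => ginv i j p) * Matrix.of (fun i j => metricTensor F i j p) = 1)
    (h1 : ∀ i j, ∀ p ∈ OmegaSet U, nablaT G (metricTensor F) i j p = 0)
    (h2 : ∀ i j, ∀ p ∈ OmegaSet U, nablaT G (pdyy Ft) i j p = 0) :
    (∀ i j, ∀ p ∈ OmegaSet U,
        Sop G (Hten F Ft ginv i j) p
            + ∑ k, Ncoef G i k p * Hten F Ft ginv k j p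
            - ∑ k, Ncoef G k j p * Hten F Ft ginv i k p = 0) ∧
      (∀ m : ℕ, 0 < m → ∀ p ∈ OmegaSet U,
        Sop G (fun q => Matrix.trace ((Matrix.of (fun i j => Hten F Ft ginv i j q)) ^ m)) p
          = 0) := by
  have key := fun p (hp : p ∈ OmegaSet U) =>
    H_hasD U hU G hG F hF Ft hFt ginv hinv h1 h2 hp
  refine ⟨fun i j p hp => ?_, fun m _ p hp => ?_⟩
  · have h := (key p hp i j).2
    simp only [Matrix.of_apply, Matrix.sub_apply, Matrix.mul_apply] at h
    have h' : Sop G (Hten F Ft ginv i j) p = _ := (Sop_eq _ _ _).trans h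
    rw [h']
    have : ∑ k, Ncoef G k j p * Hten F Ft ginv i k p
        = ∑ k, Hten F Ft ginv i k p * Ncoef G k j p :=
      Finset.sum_congr rfl fun k _ => mul_comm _ _
    rw [this]
    ring
  · have h := (key p hp).pow m
    rw [Sop_eq]
    simp only [Matrix.trace, Matrix.diag_apply]
    rw [fderiv_fun_sum fun i _ => (h i i).1]
    have h3 : ∀ L : Fin n → (Pt n →L[ℝ] ℝ), (∑ i, L i) (Vs G p) = ∑ i, L i (Vs G p) :=
      fun L => by simp
    rw [h3, Finset.sum_congr rfl fun i _ => (h i i).2]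
    change Matrix.trace _ = 0
    rw [Matrix.trace_sub, Matrix.trace_mul_comm, sub_self]
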